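/- Under the hypotheses of the Condition Number Theorem, suppose moreover that A_1 = ⋯ = A_n = A and C_1 = ⋯ = C_n = C, where Conv(A) has dimension n. Let (p,q) ∈ ℝⁿ×ℝⁿ, z := exp(p+iq), and let f ∈ ℱ satisfy f(z) = 0, ‖f^i‖_{C⁻¹} = 1 for every i, and D̂(f) invertible. Then 1/d_ℙ(f, Σ_{(p,q)}) = sup_{‖ḟ‖≤1} ‖DG_f ḟ‖_A, i.e. the lower and upper bounds of the Condition Number Theorem coincide. -/

import Mathlib

open MeasureTheory Finset
open scoped ENNReal Pointwise

noncomputable section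

namespace SparseRandom

variable {n : ℕ}

/-- `exp(p+iq) ∈ (ℂ*)ⁿ` in logarithmic coordinates. -/
def zexp (p q : Fin n → ℝ) : Fin n → ℂ :=
  fun j => Complex.exp ((p j : ℂ) + (q j : ℂ) * Complex.I)

/-- The (Laurent) monomial `z^a` for an integer exponent vector `a`. -/
def mono (z : Fin n → ℂ) (a : Fin n → ℤ) : ℂ := ∏ j, z j ^ (a j)

/-- Evaluation of the polynomial with support `A` and coefficient vector `f` at `z`. -/
def evalP {A : Finset (Fin n → ℤ)} (f : A → ℂ) (z : Fin n → ℂ) : ℂ :=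
  ∑ a : A, f a * mono z (a : Fin n → ℤ)

/-- The squared weighted norm `‖f‖²_{C⁻¹} = ∑_a |f_a|²/c_a`. -/
def nsq {A : Finset (Fin n → ℤ)} (c : (Fin n → ℤ) → ℝ) (f : A → ℂ) : ℝ :=
  ∑ a : A, Complex.normSq (f a) / c (a : Fin n → ℤ)

/-- The Gaussian probability measure `γ = ⊗ᵢ γ_{Aᵢ,Cᵢ}` on the system space
`ℱ = Πᵢ ℱ_ℂ(Aᵢ)`, given by its density w.r.t. Lebesgue measure. -/
def gauss (A : Fin n → Finset (Fin n → ℤ)) (c : Fin n → (Fin n → ℤ) → ℝ) :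
    Measure ((i : Fin n) → (A i) → ℂ) :=
  volume.withDensity fun f => ENNReal.ofReal
    (∏ i, (((2 * Real.pi) ^ (A i).card)⁻¹ * (∏ a : A i, c i (a : Fin n → ℤ))⁻¹ *
      Real.exp (- nsq (c i) (f i) / 2)))

/-- `z` is a common root of the system `f`. -/
def isRootAt (A : Fin n → Finset (Fin n → ℤ)) (f : (i : Fin n) → (A i) → ℂ)
    (z : Fin n → ℂ) : Prop :=
  ∀ i, evalP (f i) z = 0

/-- The Jacobian matrix `(∂f^i/∂x_j)` of the system `f` at a point `z ∈ (ℂ*)ⁿ`. -/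
def jac (A : Fin n → Finset (Fin n → ℤ)) (f : (i : Fin n) → (A i) → ℂ)
    (z : Fin n → ℂ) : Matrix (Fin n) (Fin n) ℂ :=
  Matrix.of fun i j => ∑ a : A i, f i a * ((a : Fin n → ℤ) j : ℂ) * mono z (a : Fin n → ℤ) / z j

/-- The matrix `D̂(f)_{ij} = z_j ∂f^i/∂x_j(z)`, i.e. the derivative of the system in the
logarithmic variable `p+iq`. -/
def Dhat (A : Fin n → Finset (Fin n → ℤ)) (f : (i : Fin n) → (A i) → ℂ)
    (z : Fin n → ℂ) : Matrix (Fin n) (Fin n) ℂ :=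
  Matrix.of fun i j => ∑ a : A i, f i a * ((a : Fin n → ℤ) j : ℂ) * mono z (a : Fin n → ℤ)

/-- `Σ_{(p,q)}`: systems with `exp(p+iq)` as a degenerate root. -/
def SigmaPQ (A : Fin n → Finset (Fin n → ℤ)) (p q : Fin n → ℝ) :
    Set ((i : Fin n) → (A i) → ℂ) :=
  {g | isRootAt A g (zexp p q) ∧ (jac A g (zexp p q)).det = 0}

/-- Multiprojective distance `d_ℙ(f,g)`. -/
def dP (c : Fin n → (Fin n → ℤ) → ℝ) {A : Fin n → Finset (Fin n → ℤ)}
    (f g : (i : Fin n) → (A i) → ℂ) : ℝ :=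
  Real.sqrt (∑ i, (⨅ lam : ℂ, nsq (c i) (fun a => f i a - lam * g i a)) / nsq (c i) (f i))

/-- Distance from `f` to a set `S` of systems. -/
def dPS (c : Fin n → (Fin n → ℤ) → ℝ) {A : Fin n → Finset (Fin n → ℤ)}
    (f : (i : Fin n) → (A i) → ℂ) (S : Set ((i : Fin n) → (A i) → ℂ)) : ℝ :=
  sInf ((dP c f) '' S)

/-- The image of `A ⊂ ℤⁿ` in `ℝⁿ`. -/
def coeA (A : Finset (Fin n → ℤ)) : Set (Fin n → ℝ) :=
  (fun (a : Fin n → ℤ) (j : Fin n) => (a j : ℝ)) '' (A : Set (Fin n → ℤ))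

/-- The Kähler potential `g_A(p) = ½ log ∑_{a∈A} c_a e^{2⟨a,p⟩}`. -/
def gA (A : Finset (Fin n → ℤ)) (c : (Fin n → ℤ) → ℝ) (p : Fin n → ℝ) : ℝ :=
  (1 / 2) * Real.log (∑ a : A, c (a : Fin n → ℤ) * Real.exp (2 * ∑ j, ((a : Fin n → ℤ) j : ℝ) * p j))

/-- `H_A(p) = ½ ∇² g_A(p)`, half the Hessian of the Kähler potential. -/
def HessA (A : Finset (Fin n → ℤ)) (c : (Fin n → ℤ) → ℝ) (p : Fin n → ℝ) :
    Matrix (Fin n) (Fin n) ℝ :=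
  Matrix.of fun j k =>
    (1 / 2) * fderiv ℝ (fun x => fderiv ℝ (gA A c) x (Pi.single j 1)) p (Pi.single k 1)

/-- The mixed integrand `I(p)`, the coefficient of the volume form in
`(−1)^{n(n−1)/2} ω_{A_1} ∧ ⋯ ∧ ω_{A_n}`. -/
def mixedI (A : Fin n → Finset (Fin n → ℤ)) (c : Fin n → (Fin n → ℤ) → ℝ)
    (p : Fin n → ℝ) : ℝ :=
  ∑ σ : Equiv.Perm (Fin n), ∑ τ : Equiv.Perm (Fin n),
    ((Equiv.Perm.sign σ : ℤ) : ℝ) * ((Equiv.Perm.sign τ : ℤ) : ℝ) *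
      ∏ i, HessA (A i) (c i) p (σ i) (τ i)

end SparseRandom

namespace SparseRandom

variable {n : ℕ}

/-- The norm `‖u‖_A` on `ℂⁿ` induced by the Hermitian form `uᴴ·H_A(p)·u`. -/
def normA (H : Matrix (Fin n) (Fin n) ℝ) (u : Fin n → ℂ) : ℝ :=
  Real.sqrt ((∑ j, ∑ k, (starRingEnd ℂ) (u j) * (H j k : ℂ) * u k).re)

/-- The condition map `DG_f : ḟ ↦ D̂(f)⁻¹·(ḟ¹(z),…,ḟⁿ(z))ᵀ`. -/
def DG (A : Fin n → Finset (Fin n → ℤ)) (f : (i : Fin n) → (A i) → ℂ)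
    (z : Fin n → ℂ) (df : (i : Fin n) → (A i) → ℂ) : Fin n → ℂ :=
  (Dhat A f z)⁻¹.mulVec fun i => evalP (df i) z

/-- The norm `‖ḟ‖ = (∑ᵢ ‖ḟ^i‖²_{Cᵢ⁻¹})^{1/2}` on the system space. -/
def normSys (c : Fin n → (Fin n → ℤ) → ℝ) {A : Fin n → Finset (Fin n → ℤ)}
    (df : (i : Fin n) → (A i) → ℂ) : ℝ :=
  Real.sqrt (∑ i, nsq (c i) (df i))

end SparseRandom

open SparseRandom

/-!
With `v = (z^a)_{a ∈ A}`, let `t(u)` be the component of `(⟨a, u⟩ z^a)_{a ∈ A}` orthogonal to `v`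
for the Hermitian norm dual to `‖·‖_{C⁻¹}`. The Hessian of `g_A` is a covariance of exponents, so
`‖·‖_A` is the Fubini–Study norm: `‖u‖_A² = ‖t(u)‖² / ‖v‖²`.

A system `g` is in `Σ_{(p,q)}` iff `g · v = 0` and `g · t(u) = 0` for some `u ≠ 0`. As `f · v = 0`,
we have `D̂(f) u = f · t(u)`, and since `v` and `t(u)` are orthogonal, the squared distance from `f`
to the systems of this kind with `u` fixed is `|D̂(f) u|² / ‖t(u)‖²`. On the other hand, `DG_f`
maps the unit ball onto the ellipsoid `|D̂(f) u|² ≤ ‖v‖²`. Normalizing `|D̂(f) u| = ‖v‖` turns the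
distance into `‖v‖ / ‖t(u)‖ = 1 / ‖u‖_A`, so both sides of the theorem optimize the same function
of `u`.
-/

namespace SparseRandom

open scoped Matrix

theorem one_div_sInf_eq_iSup {ι : Type*} {s : Set ℝ} {F : ι → ℝ} (hs : s.Nonempty)
    (hF : BddAbove (Set.range F)) (hsF : ∀ d ∈ s, ∃ i, 0 < F i ∧ 1 / F i ≤ d)
    (hFs : ∀ i, 0 < F i → ∃ d ∈ s, d ≤ 1 / F i) : 1 / sInf s = ⨆ i, F i := by
  obtain ⟨d₀, hd₀⟩ := hs
  obtain ⟨i₀, hi₀, -⟩ := hsF d₀ hd₀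
  have : Nonempty ι := ⟨i₀⟩
  have iSup_pos : 0 < ⨆ i, F i := hi₀.trans_le (le_ciSup hF i₀)
  have le_mem : ∀ d ∈ s, 1 / ⨆ i, F i ≤ d := fun d hd => by
    obtain ⟨i, hi, hid⟩ := hsF d hd
    exact (one_div_le_one_div_of_le hi (le_ciSup hF i)).trans hid
  have le_sInf : 1 / ⨆ i, F i ≤ sInf s := le_csInf ⟨d₀, hd₀⟩ le_mem
  have sInf_pos : 0 < sInf s := (one_div_pos.2 iSup_pos).trans_le le_sInf
  refine le_antisymm ((one_div_le iSup_pos sInf_pos).1 le_sInf) (ciSup_le fun i => ?_)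
  rcases le_or_gt (F i) 0 with hi | hi
  · exact hi.trans (one_div_pos.2 sInf_pos).le
  · obtain ⟨d, hd, hdi⟩ := hFs i hi
    exact (le_one_div hi sInf_pos).2 ((csInf_le ⟨_, le_mem⟩ hd).trans hdi)

section LogSumExp

variable {ι E : Type*} [Fintype ι] [NormedAddCommGroup E] [NormedSpace ℝ E]

theorem hasFDerivAt_sum_mul_exp (k : ι → ℝ) (l : ι → E →L[ℝ] ℝ) (x : E) :
    HasFDerivAt (fun y => ∑ i, k i * Real.exp (l i y)) (∑ i, (k i * Real.exp (l i x)) • l i) x := by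
  refine HasFDerivAt.fun_sum fun i _ => ?_
  simpa only [smul_smul] using ((l i).hasFDerivAt (x := x)).exp.const_mul (k i)

theorem sum_mul_exp_pos [Nonempty ι] {k : ι → ℝ} (hk : ∀ i, 0 < k i) (t : ι → ℝ) :
    0 < ∑ i, k i * Real.exp (t i) :=
  sum_pos (fun i _ => mul_pos (hk i) (Real.exp_pos _)) univ_nonempty

theorem fderiv_log_sum_mul_exp [Nonempty ι] {k : ι → ℝ} (hk : ∀ i, 0 < k i)
    (l : ι → E →L[ℝ] ℝ) (x v : E) :
    fderiv ℝ (fun y => Real.log (∑ i, k i * Real.exp (l i y))) x v =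
      (∑ i, k i * l i v * Real.exp (l i x)) / ∑ i, k i * Real.exp (l i x) := by
  rw [((hasFDerivAt_sum_mul_exp k l x).log (sum_mul_exp_pos hk _).ne').fderiv]
  simp only [smul_apply, _root_.sum_apply, smul_eq_mul, mul_right_comm, inv_mul_eq_div]

/-- The right-hand side is the covariance of `l · v` and `l · w` under the Gibbs weights. -/
theorem fderiv_fderiv_log_sum_mul_exp [Nonempty ι] {k : ι → ℝ} (hk : ∀ i, 0 < k i)
    (l : ι → E →L[ℝ] ℝ) (x v w : E) :
    fderiv ℝ (fun y => fderiv ℝ (fun y => Real.log (∑ i, k i * Real.exp (l i y))) y v) x w =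
      (∑ i, k i * Real.exp (l i x) * (l i v * l i w)) / (∑ i, k i * Real.exp (l i x)) -
        (∑ i, k i * Real.exp (l i x) * l i v) * (∑ i, k i * Real.exp (l i x) * l i w) /
          (∑ i, k i * Real.exp (l i x)) ^ 2 := by
  have hZ := (sum_mul_exp_pos hk fun i => l i x).ne'
  simp only [fderiv_log_sum_mul_exp hk]
  have hinv : HasFDerivAt (fun y => (∑ i, k i * Real.exp (l i y))⁻¹) _ x :=
    (hasDerivAt_inv hZ).comp_hasFDerivAt x (hasFDerivAt_sum_mul_exp k l x)
  simp only [div_eq_mul_inv]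
  rw [((hasFDerivAt_sum_mul_exp (fun i => k i * l i v) l x).fun_mul hinv).fderiv]
  simp only [smul_apply, _root_.add_apply, _root_.sum_apply, smul_eq_mul]
  have hvw : ∑ i, k i * l i v * Real.exp (l i x) * l i w =
      ∑ i, k i * Real.exp (l i x) * (l i v * l i w) := sum_congr rfl fun i _ => by ring
  have hv : ∑ i, k i * l i v * Real.exp (l i x) = ∑ i, k i * Real.exp (l i x) * l i v :=
    sum_congr rfl fun i _ => by ring
  rw [hvw, hv]
  field_simp
  ring

end LogSumExp

variable {n : ℕ}

section Duality

variable {A : Finset (Fin n → ℤ)} {c : (Fin n → ℤ) → ℝ}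

/-- The squared norm dual to `nsq` on linear functionals `f ↦ f ⬝ᵥ y`. -/
def dualNsq (c : (Fin n → ℤ) → ℝ) (y : A → ℂ) : ℝ :=
  ∑ a : A, c a * Complex.normSq (y a)

/-- The coefficient vector representing the functional `f ↦ f ⬝ᵥ y` under the Hermitian product
of `nsq`; thus `riesz c x ⬝ᵥ y` is the Hermitian product of `x` and `y` polarizing `dualNsq`. -/
def riesz (c : (Fin n → ℤ) → ℝ) : (A → ℂ) →ₗ⋆[ℂ] (A → ℂ) where
  toFun y a := c a * starRingEnd ℂ (y a)
  map_add' x y := by ext a; simp [mul_add]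
  map_smul' t y := by ext a; simp [mul_left_comm]

theorem riesz_apply (y : A → ℂ) (a : A) : riesz c y a = c a * starRingEnd ℂ (y a) := rfl

theorem conj_riesz_dotProduct (x y : A → ℂ) :
    starRingEnd ℂ (riesz c x ⬝ᵥ y) = riesz c y ⬝ᵥ x := by
  simp only [dotProduct, riesz_apply, map_sum, map_mul, Complex.conj_ofReal, Complex.conj_conj]
  exact sum_congr rfl fun a _ => by ring

theorem riesz_dotProduct_self (y : A → ℂ) : riesz c y ⬝ᵥ y = dualNsq c y := by
  simp only [dotProduct, riesz_apply, dualNsq, Complex.ofReal_sum, Complex.ofReal_mul, mul_assoc,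
    Complex.normSq_eq_conj_mul_self]

theorem riesz_ofReal_mul_dotProduct (x y : A → ℝ) (v : A → ℂ) :
    (riesz c fun a => x a * v a) ⬝ᵥ (fun a => y a * v a) =
      ((∑ a : A, c a * Complex.normSq (v a) * (x a * y a) : ℝ) : ℂ) := by
  simp only [dotProduct, riesz_apply, map_mul, Complex.conj_ofReal, Complex.ofReal_sum,
    Complex.ofReal_mul, Complex.normSq_eq_conj_mul_self]
  exact sum_congr rfl fun a _ => by ring

theorem nsq_nonneg (hc : ∀ a ∈ A, 0 < c a) (f : A → ℂ) : 0 ≤ nsq c f :=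
  sum_nonneg fun a _ => div_nonneg (Complex.normSq_nonneg _) (hc a a.2).le

theorem dualNsq_nonneg (hc : ∀ a ∈ A, 0 < c a) (y : A → ℂ) : 0 ≤ dualNsq c y :=
  sum_nonneg fun a _ => mul_nonneg (hc a a.2).le (Complex.normSq_nonneg _)

theorem dualNsq_pos (hc : ∀ a ∈ A, 0 < c a) {y : A → ℂ} (hy : y ≠ 0) : 0 < dualNsq c y := by
  obtain ⟨a, ha⟩ := Function.ne_iff.1 hy
  exact sum_pos' (fun a _ => mul_nonneg (hc a a.2).le (Complex.normSq_nonneg _))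
    ⟨a, mem_univ a, mul_pos (hc a a.2) (Complex.normSq_pos.2 ha)⟩

theorem normSq_dotProduct_le (hc : ∀ a ∈ A, 0 < c a) (f y : A → ℂ) :
    Complex.normSq (f ⬝ᵥ y) ≤ nsq c f * dualNsq c y := by
  have triangle : ‖f ⬝ᵥ y‖ ≤ ∑ a, ‖f a‖ * ‖y a‖ := by
    simpa only [dotProduct, norm_mul] using norm_sum_le univ fun a => f a * y a
  rw [Complex.normSq_eq_norm_sq]
  refine (pow_le_pow_left₀ (norm_nonneg _) triangle 2).trans <|
    sum_sq_le_sum_mul_sum_of_sq_le_mul _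
      (fun a _ => div_nonneg (Complex.normSq_nonneg _) (hc a a.2).le)
      (fun a _ => mul_nonneg (hc a a.2).le (Complex.normSq_nonneg _)) fun a _ => ?_
  have := (hc a a.2).ne'
  simp only [Complex.normSq_eq_norm_sq]
  exact le_of_eq (by field_simp)

/-- The coefficient vector of least `nsq` among those with `f ⬝ᵥ y = w`, for `y ≠ 0`. -/
def leastNorm (c : (Fin n → ℤ) → ℝ) (y : A → ℂ) (w : ℂ) : A → ℂ :=
  (w / dualNsq c y) • riesz c y

theorem leastNorm_dotProduct_self {y : A → ℂ} (hy : dualNsq c y ≠ 0) (w : ℂ) :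
    leastNorm c y w ⬝ᵥ y = w := by
  rw [leastNorm, smul_dotProduct, riesz_dotProduct_self, smul_eq_mul,
    div_mul_cancel₀ _ (Complex.ofReal_ne_zero.2 hy)]

theorem leastNorm_dotProduct_eq_zero {x y : A → ℂ} (hxy : riesz c y ⬝ᵥ x = 0) (w : ℂ) :
    leastNorm c y w ⬝ᵥ x = 0 := by
  rw [leastNorm, smul_dotProduct, hxy, smul_zero]

theorem nsq_riesz (hc : ∀ a ∈ A, 0 < c a) (y : A → ℂ) : nsq c (riesz c y) = dualNsq c y := by
  refine sum_congr rfl fun a _ => ?_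
  have := (hc a a.2).ne'
  simp only [riesz_apply, Complex.normSq_mul, Complex.normSq_ofReal, Complex.normSq_conj]
  field_simp

theorem nsq_smul (t : ℂ) (f : A → ℂ) : nsq c (t • f) = Complex.normSq t * nsq c f := by
  simp only [nsq, Pi.smul_apply, smul_eq_mul, Complex.normSq_mul, mul_div_assoc, mul_sum]

theorem nsq_leastNorm (hc : ∀ a ∈ A, 0 < c a) (y : A → ℂ) (w : ℂ) :
    nsq c (leastNorm c y w) = Complex.normSq w / dualNsq c y := by
  rw [leastNorm, nsq_smul, nsq_riesz hc, Complex.normSq_div, Complex.normSq_ofReal]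
  rcases eq_or_ne (dualNsq c y) 0 with h | h
  · simp [h]
  · field_simp

/-- The component of `y` orthogonal to `v` for the Hermitian product `riesz c x ⬝ᵥ y`. -/
def orthComp (c : (Fin n → ℤ) → ℝ) (v y : A → ℂ) : A → ℂ :=
  y - ((riesz c v ⬝ᵥ y) / dualNsq c v) • v

theorem dotProduct_orthComp {f v : A → ℂ} (hf : f ⬝ᵥ v = 0) (y : A → ℂ) :
    f ⬝ᵥ orthComp c v y = f ⬝ᵥ y := by
  rw [orthComp, dotProduct_sub, dotProduct_smul, hf, smul_zero, sub_zero]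

theorem riesz_orthComp_dotProduct {v : A → ℂ} (hv : dualNsq c v ≠ 0) (y : A → ℂ) :
    riesz c (orthComp c v y) ⬝ᵥ v = 0 := by
  rw [← conj_riesz_dotProduct, orthComp, dotProduct_sub, dotProduct_smul, riesz_dotProduct_self,
    smul_eq_mul, div_mul_cancel₀ _ (Complex.ofReal_ne_zero.2 hv), sub_self, map_zero]

theorem ofReal_dualNsq_orthComp {v : A → ℂ} (hv : dualNsq c v ≠ 0) (y : A → ℂ) :
    (dualNsq c (orthComp c v y) : ℂ) =
      riesz c y ⬝ᵥ y - (riesz c y ⬝ᵥ v) * (riesz c v ⬝ᵥ y) / dualNsq c v := by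
  rw [← riesz_dotProduct_self, dotProduct_orthComp (riesz_orthComp_dotProduct hv y), orthComp,
    map_sub, map_smulₛₗ, sub_dotProduct, smul_dotProduct, map_div₀, conj_riesz_dotProduct,
    Complex.conj_ofReal, smul_eq_mul, div_mul_eq_mul_div]

end Duality

section MultiprojectiveDistance

variable {c : Fin n → (Fin n → ℤ) → ℝ} {A : Fin n → Finset (Fin n → ℤ)}
  {f : (i : Fin n) → A i → ℂ}

theorem dP_sub_le (hc : ∀ i, ∀ a ∈ A i, 0 < c i a) (hf : ∀ i, nsq (c i) (f i) = 1)
    (e : (i : Fin n) → A i → ℂ) : dP c f (f - e) ≤ √(∑ i, nsq (c i) (e i)) := by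
  refine Real.sqrt_le_sqrt (sum_le_sum fun i _ => ?_)
  rw [hf i, div_one]
  refine (ciInf_le ⟨0, ?_⟩ 1).trans_eq ?_
  · rintro _ ⟨lam, rfl⟩
    exact nsq_nonneg (hc i) _
  · simp only [one_mul, Pi.sub_apply, sub_sub_cancel]

theorem le_dP (hc : ∀ i, ∀ a ∈ A i, 0 < c i a) (hf : ∀ i, nsq (c i) (f i) = 1)
    {g y : (i : Fin n) → A i → ℂ} (hg : ∀ i, g i ⬝ᵥ y i = 0) :
    √(∑ i, Complex.normSq (f i ⬝ᵥ y i) / dualNsq (c i) (y i)) ≤ dP c f g := by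
  refine Real.sqrt_le_sqrt (sum_le_sum fun i _ => ?_)
  rw [hf i, div_one]
  refine le_ciInf fun lam => div_le_of_le_mul₀ (dualNsq_nonneg (hc i) _) (nsq_nonneg (hc i) _) ?_
  have hsub : (f i - lam • g i) ⬝ᵥ y i = f i ⬝ᵥ y i := by
    rw [sub_dotProduct, smul_dotProduct, hg i, smul_zero, sub_zero]
  exact hsub ▸ normSq_dotProduct_le (hc i) (f i - lam • g i) (y i)

end MultiprojectiveDistance

section Laurent

theorem zexp_ne_zero (p q : Fin n → ℝ) (j : Fin n) : zexp p q j ≠ 0 := Complex.exp_ne_zero _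

theorem normSq_mono_zexp (p q : Fin n → ℝ) (a : Fin n → ℤ) :
    Complex.normSq (mono (zexp p q) a) = Real.exp (2 * ∑ j, (a j : ℝ) * p j) := by
  have norm_factor (j : Fin n) : ‖zexp p q j ^ a j‖ = Real.exp (a j * p j) := by
    rw [norm_zpow, zexp, Complex.norm_exp, mul_comm (a j : ℝ), Real.exp_mul, Real.rpow_intCast]
    simp
  rw [Complex.normSq_eq_norm_sq, mono, norm_prod, prod_congr rfl fun j _ => norm_factor j,
    ← Real.exp_sum, ← Real.exp_nat_mul, Nat.cast_ofNat]

theorem det_jac_eq_zero_iff (A : Fin n → Finset (Fin n → ℤ)) (g : (i : Fin n) → A i → ℂ)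
    {z : Fin n → ℂ} (hz : ∀ j, z j ≠ 0) : (jac A g z).det = 0 ↔ (Dhat A g z).det = 0 := by
  have factor : jac A g z = Dhat A g z * Matrix.diagonal (fun j => (z j)⁻¹) := by
    ext i j
    simp [jac, Dhat, sum_mul, div_eq_mul_inv]
  rw [factor, Matrix.det_mul, Matrix.det_diagonal, mul_eq_zero,
    or_iff_left (prod_ne_zero_iff.2 fun j _ => inv_ne_zero (hz j))]

/-- The Veronese vector `(z^a)_{a ∈ A}`, so that `f(z) = f ⬝ᵥ veronese A z`. -/
def veronese (A : Finset (Fin n → ℤ)) (z : Fin n → ℂ) : A → ℂ := fun a => mono z a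

/-- The derivative `(⟨a, u⟩ z^a)_{a ∈ A}` of the Veronese vector in the direction `u` of the
logarithmic variable. -/
def veroneseDeriv (A : Finset (Fin n → ℤ)) (z : Fin n → ℂ) : (Fin n → ℂ) →ₗ[ℂ] (A → ℂ) where
  toFun u a := (∑ j, (a : Fin n → ℤ) j * u j) * mono z a
  map_add' u v := by ext a; simp [mul_add, sum_add_distrib, add_mul]
  map_smul' t u := by ext a; simp [mul_sum, sum_mul, mul_left_comm, mul_assoc]

/-- The Fubini–Study tangent vector to the projective Veronese embedding: the part of
`veroneseDeriv` orthogonal to the Veronese vector. -/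
def veroneseTangent (A : Finset (Fin n → ℤ)) (c : (Fin n → ℤ) → ℝ) (z u : Fin n → ℂ) : A → ℂ :=
  orthComp c (veronese A z) (veroneseDeriv A z u)

theorem evalP_eq_dotProduct {A : Finset (Fin n → ℤ)} (f : A → ℂ) (z : Fin n → ℂ) :
    evalP f z = f ⬝ᵥ veronese A z := rfl

theorem Dhat_mulVec_apply (A : Fin n → Finset (Fin n → ℤ)) (g : (i : Fin n) → A i → ℂ)
    (z u : Fin n → ℂ) (i : Fin n) : (Dhat A g z *ᵥ u) i = g i ⬝ᵥ veroneseDeriv (A i) z u := by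
  simp only [Matrix.mulVec, dotProduct, Dhat, Matrix.of_apply, veroneseDeriv, LinearMap.coe_mk,
    AddHom.coe_mk, sum_mul, mul_sum]
  rw [sum_comm]
  exact sum_congr rfl fun a _ => sum_congr rfl fun j _ => by ring

theorem Dhat_mulVec_apply_of_evalP_eq_zero {A : Fin n → Finset (Fin n → ℤ)}
    {g : (i : Fin n) → A i → ℂ} {z : Fin n → ℂ} {i : Fin n} (hg : evalP (g i) z = 0)
    (c : (Fin n → ℤ) → ℝ) (u : Fin n → ℂ) :
    (Dhat A g z *ᵥ u) i = g i ⬝ᵥ veroneseTangent (A i) c z u := by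
  rw [Dhat_mulVec_apply, veroneseTangent, dotProduct_orthComp (v := veronese (A i) z) hg]

theorem dualNsq_veronese_zexp_pos {A : Finset (Fin n → ℤ)} [Nonempty A] {c : (Fin n → ℤ) → ℝ}
    (hc : ∀ a ∈ A, 0 < c a) (p q : Fin n → ℝ) : 0 < dualNsq c (veronese A (zexp p q)) := by
  refine dualNsq_pos hc fun h => ?_
  obtain ⟨a⟩ := ‹Nonempty A›
  have mono_ne_zero : mono (zexp p q) a ≠ 0 :=
    prod_ne_zero_iff.2 fun j _ => zpow_ne_zero _ (zexp_ne_zero p q j)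
  exact mono_ne_zero (congrFun h a)

end Laurent

section FubiniStudy

variable {A : Finset (Fin n → ℤ)} [Nonempty A] {c : (Fin n → ℤ) → ℝ}

theorem HessA_apply (hc : ∀ a ∈ A, 0 < c a) (p : Fin n → ℝ) (j k : Fin n) :
    let w : A → ℝ := fun a => c a * Real.exp (2 * ∑ j, ((a : Fin n → ℤ) j : ℝ) * p j)
    HessA A c p j k =
      (∑ a : A, w a * ((a : Fin n → ℤ) j * (a : Fin n → ℤ) k)) / (∑ a, w a) -
        (∑ a : A, w a * (a : Fin n → ℤ) j) * (∑ a : A, w a * (a : Fin n → ℤ) k) /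
          (∑ a, w a) ^ 2 := by
  intro w
  let l (a : A) : (Fin n → ℝ) →L[ℝ] ℝ :=
    (2 : ℝ) • ∑ j, ((a : Fin n → ℤ) j : ℝ) • ContinuousLinearMap.proj (R := ℝ) j
  have l_apply (a : A) (x : Fin n → ℝ) : l a x = 2 * ∑ j, ((a : Fin n → ℤ) j : ℝ) * x j := by
    simp [l]
  have l_single (a : A) (j : Fin n) : l a (Pi.single j 1) = 2 * (a : Fin n → ℤ) j := by
    simp [l_apply, Pi.single_apply]
  let logSum (x : Fin n → ℝ) : ℝ := Real.log (∑ a : A, c a * Real.exp (l a x))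
  have gA_eq : gA A c = (1 / 2 : ℝ) • logSum := by
    funext x
    simp [gA, logSum, l_apply]
  have fderiv_gA (v : Fin n → ℝ) : (fun x => fderiv ℝ (gA A c) x v) =
      (1 / 2 : ℝ) • fun x => fderiv ℝ logSum x v := by
    funext x
    rw [gA_eq, fderiv_const_smul_field]
    rfl
  have w_eq (a : A) : c a * Real.exp (l a p) = w a := by rw [l_apply]
  simp only [HessA, Matrix.of_apply, fderiv_gA, fderiv_const_smul_field, Pi.smul_apply, smul_apply,
    smul_eq_mul, logSum]
  rw [fderiv_fderiv_log_sum_mul_exp (fun a : A => hc a a.2)]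
  simp only [w_eq, l_single, mul_mul_mul_comm (2 : ℝ), mul_left_comm (w _), ← mul_sum]
  ring

theorem ofReal_HessA_apply (hc : ∀ a ∈ A, 0 < c a) (p q : Fin n → ℝ) (j k : Fin n) :
    let v := veronese A (zexp p q)
    let dv (j : Fin n) := veroneseDeriv A (zexp p q) (Pi.single j 1)
    (HessA A c p j k : ℂ) = (riesz c (dv j) ⬝ᵥ dv k) / dualNsq c v -
      (riesz c (dv j) ⬝ᵥ v) * (riesz c v ⬝ᵥ dv k) / dualNsq c v ^ 2 := by
  intro v dv
  have dv_eq (j : Fin n) : dv j = fun a : A => (((a : Fin n → ℤ) j : ℝ) : ℂ) * v a := by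
    ext a
    simp [dv, v, veroneseDeriv, veronese, Pi.single_apply]
  have normSq_v (a : A) : Real.exp (2 * ∑ j, ((a : Fin n → ℤ) j : ℝ) * p j) =
      Complex.normSq (v a) := (normSq_mono_zexp p q a).symm
  have dv_dv := riesz_ofReal_mul_dotProduct (c := c) (fun a : A => ((a : Fin n → ℤ) j : ℝ))
    (fun a => ((a : Fin n → ℤ) k : ℝ)) v
  have dv_v := riesz_ofReal_mul_dotProduct (c := c) (fun a : A => ((a : Fin n → ℤ) j : ℝ)) 1 v
  have v_dv := riesz_ofReal_mul_dotProduct (c := c) 1 (fun a : A => ((a : Fin n → ℤ) k : ℝ)) v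
  simp only [Pi.one_apply, Complex.ofReal_one, one_mul, mul_one] at dv_v v_dv
  rw [HessA_apply hc, dv_eq, dv_eq, dv_dv, dv_v, v_dv]
  simp only [normSq_v, dualNsq, Complex.ofReal_sub, Complex.ofReal_mul, Complex.ofReal_div,
    Complex.ofReal_pow]

theorem sum_conj_mul_HessA_mul (hc : ∀ a ∈ A, 0 < c a) (p q : Fin n → ℝ) (u : Fin n → ℂ) :
    let v := veronese A (zexp p q)
    let dv := veroneseDeriv A (zexp p q) u
    ∑ j, ∑ k, starRingEnd ℂ (u j) * (HessA A c p j k : ℂ) * u k =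
      (riesz c dv ⬝ᵥ dv) / dualNsq c v -
        (riesz c dv ⬝ᵥ v) * (riesz c v ⬝ᵥ dv) / dualNsq c v ^ 2 := by
  intro v dv
  let e (j : Fin n) := veroneseDeriv A (zexp p q) (Pi.single j 1)
  have dv_eq : dv = ∑ j, u j • e j := by
    simp only [dv, e, ← map_smul, ← map_sum, ← pi_eq_sum_univ']
  have expand_left (x : A → ℂ) :
      riesz c dv ⬝ᵥ x = ∑ j, starRingEnd ℂ (u j) * (riesz c (e j) ⬝ᵥ x) := by
    simp only [dv_eq, map_sum, map_smulₛₗ, sum_dotProduct, smul_dotProduct, smul_eq_mul]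
  have expand_right (f : A → ℂ) : f ⬝ᵥ dv = ∑ k, (f ⬝ᵥ e k) * u k := by
    simp only [dv_eq, dotProduct_sum, dotProduct_smul, smul_eq_mul, mul_comm (u _)]
  rw [expand_left dv, expand_left v, expand_right (riesz c v), sum_mul_sum]
  simp only [expand_right, mul_sum, sum_div, ← sum_sub_distrib]
  refine sum_congr rfl fun j _ => sum_congr rfl fun k _ => ?_
  rw [ofReal_HessA_apply hc p q]
  ring

theorem normA_HessA (hc : ∀ a ∈ A, 0 < c a) (p q : Fin n → ℝ) (u : Fin n → ℂ) :
    normA (HessA A c p) u = √(dualNsq c (veroneseTangent A c (zexp p q) u) /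
      dualNsq c (veronese A (zexp p q))) := by
  have hv := (dualNsq_veronese_zexp_pos hc p q).ne'
  have ofReal_form : ∑ j, ∑ k, starRingEnd ℂ (u j) * (HessA A c p j k : ℂ) * u k =
      ((dualNsq c (veroneseTangent A c (zexp p q) u) /
        dualNsq c (veronese A (zexp p q)) : ℝ) : ℂ) := by
    rw [sum_conj_mul_HessA_mul hc p q, Complex.ofReal_div, veroneseTangent,
      ofReal_dualNsq_orthComp hv, sub_div, div_div, sq]
  rw [normA, ofReal_form, Complex.ofReal_re]

end FubiniStudy

section ConditionNumber

theorem exists_mulVec_eq_zero_sum_normSq_eq {m : Type*} [Fintype m] [DecidableEq m]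
    {M P : Matrix m m ℂ} (hM : M.det ≠ 0) (hP : P.det = 0) {s : ℝ} (hs : 0 < s) :
    ∃ u ≠ 0, P *ᵥ u = 0 ∧ ∑ i, Complex.normSq ((M *ᵥ u) i) = s := by
  obtain ⟨w, hw, hPw⟩ := Matrix.exists_mulVec_eq_zero_iff.2 hP
  obtain ⟨i, hi⟩ := Function.ne_iff.1 (Matrix.eq_zero_of_mulVec_eq_zero hM |>.mt hw)
  have image_pos : 0 < ∑ i, Complex.normSq ((M *ᵥ w) i) :=
    sum_pos' (fun i _ => Complex.normSq_nonneg _) ⟨i, mem_univ i, Complex.normSq_pos.2 hi⟩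
  set r : ℝ := √(s / ∑ i, Complex.normSq ((M *ᵥ w) i)) with hr
  have r_pos : 0 < r := Real.sqrt_pos.2 (div_pos hs image_pos)
  refine ⟨(r : ℂ) • w, smul_ne_zero (Complex.ofReal_ne_zero.2 r_pos.ne') hw, ?_, ?_⟩
  · rw [Matrix.mulVec_smul, hPw, smul_zero]
  · simp only [Matrix.mulVec_smul, Pi.smul_apply, smul_eq_mul, Complex.normSq_mul,
      Complex.normSq_ofReal, ← mul_sum]
    rw [hr, Real.mul_self_sqrt (div_pos hs image_pos).le, div_mul_cancel₀ _ image_pos.ne']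

theorem zero_mem_SigmaPQ [Nonempty (Fin n)] (A : Fin n → Finset (Fin n → ℤ)) (p q : Fin n → ℝ) :
    0 ∈ SigmaPQ A p q := by
  refine ⟨fun i => zero_dotProduct _, ?_⟩
  have jac_zero : jac A 0 (zexp p q) = 0 := by
    ext i j
    simp [jac]
  rw [jac_zero]
  exact Matrix.det_zero

theorem Dhat_mulVec_DG {A : Fin n → Finset (Fin n → ℤ)} {f : (i : Fin n) → A i → ℂ}
    {z : Fin n → ℂ} (hf : (Dhat A f z).det ≠ 0) (df : (i : Fin n) → A i → ℂ) :
    Dhat A f z *ᵥ DG A f z df = fun i => evalP (df i) z := by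
  rw [DG, Matrix.mulVec_mulVec, Matrix.mul_nonsing_inv _ (isUnit_iff_ne_zero.2 hf),
    Matrix.one_mulVec]

variable {A : Finset (Fin n → ℤ)} {c : (Fin n → ℤ) → ℝ}

theorem sum_normSq_evalP_le (hc : ∀ a ∈ A, 0 < c a) {df : Fin n → A → ℂ}
    (hdf : normSys (A := fun _ => A) (fun _ => c) df ≤ 1) (z : Fin n → ℂ) :
    ∑ i, Complex.normSq (evalP (df i) z) ≤ dualNsq c (veronese A z) := by
  have nsq_le : ∑ i, nsq c (df i) ≤ 1 := Real.sqrt_le_one.1 hdf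
  calc
    ∑ i, Complex.normSq (evalP (df i) z) ≤ ∑ i, nsq c (df i) * dualNsq c (veronese A z) :=
      sum_le_sum fun i _ => normSq_dotProduct_le hc (df i) (veronese A z)
    _ = (∑ i, nsq c (df i)) * dualNsq c (veronese A z) := (sum_mul ..).symm
    _ ≤ dualNsq c (veronese A z) := mul_le_of_le_one_left (dualNsq_nonneg hc _) nsq_le

theorem exists_normSys_le_one_evalP_eq (hc : ∀ a ∈ A, 0 < c a) {z : Fin n → ℂ}
    (hz : 0 < dualNsq c (veronese A z)) {y : Fin n → ℂ}
    (hy : ∑ i, Complex.normSq (y i) ≤ dualNsq c (veronese A z)) :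
    ∃ df : Fin n → A → ℂ, normSys (A := fun _ => A) (fun _ => c) df ≤ 1 ∧
      ∀ i, evalP (df i) z = y i := by
  refine ⟨fun i => leastNorm c (veronese A z) (y i), Real.sqrt_le_one.2 ?_,
    fun i => leastNorm_dotProduct_self hz.ne' (y i)⟩
  simp only [nsq_leastNorm hc, ← sum_div]
  exact div_le_one_of_le₀ hy hz.le

theorem exists_normSys_le_one_DG_eq (hc : ∀ a ∈ A, 0 < c a) {f : Fin n → A → ℂ} {z : Fin n → ℂ}
    (hz : 0 < dualNsq c (veronese A z)) (hf : (Dhat (fun _ => A) f z).det ≠ 0) {u : Fin n → ℂ}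
    (hu : ∑ i, Complex.normSq ((Dhat (fun _ => A) f z *ᵥ u) i) ≤ dualNsq c (veronese A z)) :
    ∃ df : Fin n → A → ℂ, normSys (A := fun _ => A) (fun _ => c) df ≤ 1 ∧
      DG (fun _ => A) f z df = u := by
  obtain ⟨df, hdf, eval_df⟩ := exists_normSys_le_one_evalP_eq hc hz hu
  refine ⟨df, hdf, ?_⟩
  rw [DG, funext eval_df, Matrix.mulVec_mulVec,
    Matrix.nonsing_inv_mul _ (isUnit_iff_ne_zero.2 hf), Matrix.one_mulVec]

theorem bddAbove_range_normA_DG (hc : ∀ a ∈ A, 0 < c a) (H : Matrix (Fin n) (Fin n) ℝ)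
    (f : Fin n → A → ℂ) (z : Fin n → ℂ) :
    BddAbove (Set.range fun df : {g : Fin n → A → ℂ //
      normSys (A := fun _ => A) (fun _ => c) g ≤ 1} => normA H (DG (fun _ => A) f z df)) := by
  have continuous_normA : Continuous fun y => normA H ((Dhat (fun _ => A) f z)⁻¹ *ᵥ y) := by
    unfold normA Matrix.mulVec dotProduct
    fun_prop
  refine ((isCompact_closedBall (0 : Fin n → ℂ) √(dualNsq c (veronese A z))).bddAbove_image
    continuous_normA.continuousOn).mono ?_
  rintro _ ⟨⟨df, hdf⟩, rfl⟩
  refine ⟨fun i => evalP (df i) z, ?_, rfl⟩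
  rw [mem_closedBall_zero_iff, pi_norm_le_iff_of_nonneg (Real.sqrt_nonneg _)]
  intro i
  refine Real.le_sqrt_of_sq_le ?_
  rw [← Complex.normSq_eq_norm_sq]
  exact (single_le_sum (f := fun i => Complex.normSq (evalP (df i) z))
    (fun i _ => Complex.normSq_nonneg _) (mem_univ i)).trans (sum_normSq_evalP_le hc hdf z)

theorem dualNsq_veroneseTangent_pos (hc : ∀ a ∈ A, 0 < c a) {f : Fin n → A → ℂ}
    {z : Fin n → ℂ} (hroot : ∀ i, evalP (f i) z = 0) (hf : (Dhat (fun _ => A) f z).det ≠ 0)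
    {u : Fin n → ℂ} (hu : u ≠ 0) : 0 < dualNsq c (veroneseTangent A c z u) := by
  refine dualNsq_pos hc fun tangent_eq_zero => hu (Matrix.eq_zero_of_mulVec_eq_zero hf ?_)
  ext i
  rw [Dhat_mulVec_apply_of_evalP_eq_zero (hroot i) c, tangent_eq_zero, dotProduct_zero,
    Pi.zero_apply]

theorem exists_isRootAt_Dhat_mulVec_eq_zero_dP_le (hc : ∀ a ∈ A, 0 < c a) {f : Fin n → A → ℂ}
    {z : Fin n → ℂ} (hz : dualNsq c (veronese A z) ≠ 0) (hroot : ∀ i, evalP (f i) z = 0)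
    (hnorm : ∀ i, nsq c (f i) = 1) {u : Fin n → ℂ}
    (hu : dualNsq c (veroneseTangent A c z u) ≠ 0) :
    ∃ g : Fin n → A → ℂ, isRootAt (fun _ => A) g z ∧ Dhat (fun _ => A) g z *ᵥ u = 0 ∧
      dP (A := fun _ => A) (fun _ => c) f g ≤
        √((∑ i, Complex.normSq ((Dhat (fun _ => A) f z *ᵥ u) i)) /
          dualNsq c (veroneseTangent A c z u)) := by
  let e (i : Fin n) : A → ℂ :=
    leastNorm c (veroneseTangent A c z u) ((Dhat (fun _ => A) f z *ᵥ u) i)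
  have e_root (i : Fin n) : e i ⬝ᵥ veronese A z = 0 :=
    leastNorm_dotProduct_eq_zero (riesz_orthComp_dotProduct hz _) _
  have e_tangent (i : Fin n) :
      e i ⬝ᵥ veroneseTangent A c z u = (Dhat (fun _ => A) f z *ᵥ u) i :=
    leastNorm_dotProduct_self hu _
  have root_sub (i : Fin n) : evalP ((f - e) i) z = 0 := by
    rw [evalP_eq_dotProduct, Pi.sub_apply, sub_dotProduct, e_root, sub_zero]
    exact hroot i
  refine ⟨f - e, root_sub, ?_, (dP_sub_le (A := fun _ => A) (fun _ => hc) hnorm e).trans_eq ?_⟩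
  · ext i
    rw [Dhat_mulVec_apply_of_evalP_eq_zero (root_sub i) c, Pi.sub_apply, sub_dotProduct,
      e_tangent, Dhat_mulVec_apply_of_evalP_eq_zero (hroot i) c, sub_self, Pi.zero_apply]
  · simp only [e, nsq_leastNorm hc, sum_div]

theorem le_dP_of_Dhat_mulVec_eq_zero (hc : ∀ a ∈ A, 0 < c a) {f g : Fin n → A → ℂ}
    {z : Fin n → ℂ} (hroot : ∀ i, evalP (f i) z = 0) (hnorm : ∀ i, nsq c (f i) = 1)
    (hg : ∀ i, evalP (g i) z = 0) {u : Fin n → ℂ} (hgu : Dhat (fun _ => A) g z *ᵥ u = 0) :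
    √((∑ i, Complex.normSq ((Dhat (fun _ => A) f z *ᵥ u) i)) /
      dualNsq c (veroneseTangent A c z u)) ≤ dP (A := fun _ => A) (fun _ => c) f g := by
  have tangent (i : Fin n) : g i ⬝ᵥ veroneseTangent A c z u = 0 := by
    rw [← Dhat_mulVec_apply_of_evalP_eq_zero (A := fun _ => A) (hg i), hgu, Pi.zero_apply]
  refine le_of_eq_of_le ?_ (le_dP (A := fun _ => A) (fun _ => hc) hnorm tangent)
  simp only [sum_div, Dhat_mulVec_apply_of_evalP_eq_zero (A := fun _ => A) (hroot _) c]

variable [Nonempty A] {p q : Fin n → ℝ} {f : Fin n → A → ℂ}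

theorem one_div_normA_HessA (hc : ∀ a ∈ A, 0 < c a) (p q : Fin n → ℝ) (u : Fin n → ℂ) :
    1 / normA (HessA A c p) u = √(dualNsq c (veronese A (zexp p q)) /
      dualNsq c (veroneseTangent A c (zexp p q) u)) := by
  rw [normA_HessA hc p q, one_div, ← Real.sqrt_inv, inv_div]

theorem exists_one_div_normA_DG_le_dP (hc : ∀ a ∈ A, 0 < c a)
    (hroot : ∀ i, evalP (f i) (zexp p q) = 0) (hnorm : ∀ i, nsq c (f i) = 1)
    (hf : (Dhat (fun _ => A) f (zexp p q)).det ≠ 0) {g : Fin n → A → ℂ}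
    (hg : g ∈ SigmaPQ (fun _ => A) p q) :
    ∃ df : Fin n → A → ℂ, normSys (A := fun _ => A) (fun _ => c) df ≤ 1 ∧
      0 < normA (HessA A c p) (DG (fun _ => A) f (zexp p q) df) ∧
      1 / normA (HessA A c p) (DG (fun _ => A) f (zexp p q) df) ≤
        dP (A := fun _ => A) (fun _ => c) f g := by
  have hz := dualNsq_veronese_zexp_pos hc p q
  obtain ⟨u, hu, hgu, hfu⟩ := exists_mulVec_eq_zero_sum_normSq_eq hf
    ((det_jac_eq_zero_iff _ g (zexp_ne_zero p q)).1 hg.2) hz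
  obtain ⟨df, hdf, rfl⟩ := exists_normSys_le_one_DG_eq hc hz hf hfu.le
  refine ⟨df, hdf, ?_, ?_⟩
  · rw [normA_HessA hc p q]
    exact Real.sqrt_pos.2 (div_pos (dualNsq_veroneseTangent_pos hc hroot hf hu) hz)
  · rw [one_div_normA_HessA hc p q, ← hfu]
    exact le_dP_of_Dhat_mulVec_eq_zero hc hroot hnorm hg.1 hgu

theorem exists_mem_SigmaPQ_dP_le (hc : ∀ a ∈ A, 0 < c a)
    (hroot : ∀ i, evalP (f i) (zexp p q) = 0) (hnorm : ∀ i, nsq c (f i) = 1)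
    (hf : (Dhat (fun _ => A) f (zexp p q)).det ≠ 0) {df : Fin n → A → ℂ}
    (hdf : normSys (A := fun _ => A) (fun _ => c) df ≤ 1)
    (hpos : 0 < normA (HessA A c p) (DG (fun _ => A) f (zexp p q) df)) :
    ∃ g ∈ SigmaPQ (fun _ => A) p q, dP (A := fun _ => A) (fun _ => c) f g ≤
      1 / normA (HessA A c p) (DG (fun _ => A) f (zexp p q) df) := by
  have hu : DG (fun _ => A) f (zexp p q) df ≠ 0 := fun h => by
    simp [h, normA] at hpos
  have tangent_pos := dualNsq_veroneseTangent_pos hc hroot hf hu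
  obtain ⟨g, hg, hgu, dP_le⟩ := exists_isRootAt_Dhat_mulVec_eq_zero_dP_le hc
    (dualNsq_veronese_zexp_pos hc p q).ne' hroot hnorm tangent_pos.ne'
  refine ⟨g, ⟨hg, (det_jac_eq_zero_iff _ g (zexp_ne_zero p q)).2
    (Matrix.exists_mulVec_eq_zero_iff.1 ⟨_, hu, hgu⟩)⟩, dP_le.trans ?_⟩
  rw [one_div_normA_HessA hc p q, Dhat_mulVec_DG hf]
  gcongr
  exact sum_normSq_evalP_le hc hdf (zexp p q)

end ConditionNumber

end SparseRandom

/-- **Condition Number Theorem, unmixed case.** If `A_1 = ⋯ = A_n = A` and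
`C_1 = ⋯ = C_n = C`, with `Conv(A)` full-dimensional, and `z = exp(p+iq)` is a
nondegenerate root of `f` with `‖f^i‖_{C⁻¹} = 1` for all `i`, then
`1/d_ℙ(f,Σ_{(p,q)}) = sup_{‖ḟ‖≤1} ‖DG_f ḟ‖_A`. -/
theorem statement6 (n : ℕ) (hn : 1 ≤ n) (A : Finset (Fin n → ℤ))
    (hdim : affineSpan ℝ (coeA A) = ⊤)
    (c : (Fin n → ℤ) → ℝ) (hc : ∀ a ∈ A, 0 < c a)
    (p q : Fin n → ℝ) (f : (i : Fin n) → ((fun _ : Fin n => A) i) → ℂ)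
    (hroot : isRootAt (fun _ => A) f (zexp p q))
    (hnorm : ∀ i, nsq c (f i) = 1)
    (hnd : (Dhat (fun _ => A) f (zexp p q)).det ≠ 0) :
    1 / dPS (fun _ => c) f (SigmaPQ (fun _ => A) p q)
      = (⨆ df : {g : (i : Fin n) → ((fun _ : Fin n => A) i) → ℂ //
            normSys (fun _ => c) g ≤ 1},
          normA (HessA A c p) (DG (fun _ => A) f (zexp p q) df)) := by
  have : Nonempty (Fin n) := ⟨⟨0, hn⟩⟩
  have : Nonempty A := by
    by_contra hA
    have : IsEmpty A := not_nonempty_iff.1 hA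
    simpa [nsq] using hnorm ⟨0, hn⟩
  refine one_div_sInf_eq_iSup ⟨_, 0, zero_mem_SigmaPQ _ p q, rfl⟩
    (bddAbove_range_normA_DG hc (HessA A c p) f (zexp p q)) ?_ ?_
  · rintro _ ⟨g, hg, rfl⟩
    obtain ⟨df, hdf, pos, le⟩ := exists_one_div_normA_DG_le_dP hc hroot hnorm hnd hg
    exact ⟨⟨df, hdf⟩, pos, le⟩
  · rintro ⟨df, hdf⟩ pos
    obtain ⟨g, hg, le⟩ := exists_mem_SigmaPQ_dP_le hc hroot hnorm hnd hdf pos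
    exact ⟨_, ⟨g, hg, rfl⟩, le⟩
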